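/- arXiv:1510.07742 — 8 statements merged into one kernel-verified Lean document; each statement's English description precedes it below -/
import Mathlib

section
/- Let N ≥ 1 and let p(α) = Σ_{m=0}^{N} (a_m·cos(mα) + b_m·sin(mα)) be a trigonometric polynomial of degree at most N, and let q(α) = a_N·cos(Nα) + b_N·sin(Nα) be its top harmonic. Define the evolute operator E by (E u)(α) = u'(α − π/2). Then sup_{α ∈ ℝ} | N^{−k}·(E^k p)(α) − N^{−k}·(E^k q)(α) | → 0 as k → ∞, and for every k the function N^{−k}·(E^k q) is a pure harmonic of order N of amplitude √(a_N² + b_N²). Hence if (a_N, b_N) ≠ (0,0), the rescaled iterated evolutes of the curve with support function p converge uniformly to support functions of hypocycloids of order N. -/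
open Real Filter

/-- Iterated evolutes of a trigonometric polynomial, in phase form. -/
lemma iter_formula (E : (ℝ → ℝ) → (ℝ → ℝ))
    (hE : ∀ (u : ℝ → ℝ) (α : ℝ), E u α = deriv u (α - Real.pi / 2))
    (s : Finset ℕ) (a b : ℕ → ℝ) (u : ℝ → ℝ)
    (hu : ∀ α : ℝ, u α = ∑ m ∈ s, (a m * Real.cos (m * α) + b m * Real.sin (m * α)))
    (k : ℕ) (α : ℝ) :
    (E^[k] u) α = ∑ m ∈ s, (m : ℝ) ^ k *
      (a m * Real.cos (m * α + k * (Real.pi / 2 - m * (Real.pi / 2)))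
        + b m * Real.sin (m * α + k * (Real.pi / 2 - m * (Real.pi / 2)))) := by
  induction k generalizing α with
  | zero => simp [hu]
  | succ k ih =>
    rw [Function.iterate_succ_apply', hE, funext ih]
    apply HasDerivAt.deriv
    apply HasDerivAt.fun_sum
    intro m _
    have h1 : HasDerivAt (fun x : ℝ => (m : ℝ) * x + k * (Real.pi / 2 - m * (Real.pi / 2)))
        (m : ℝ) (α - Real.pi / 2) := by
      simpa using ((hasDerivAt_id (α - Real.pi / 2)).const_mul (m : ℝ)).add_const
        (k * (Real.pi / 2 - m * (Real.pi / 2)))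
    have h2 := ((h1.cos.const_mul (a m)).add (h1.sin.const_mul (b m))).const_mul ((m : ℝ) ^ k)
    refine h2.congr_deriv ?_
    have e : (m : ℝ) * α + ((k + 1 : ℕ) : ℝ) * (Real.pi / 2 - m * (Real.pi / 2))
        = ((m : ℝ) * (α - Real.pi / 2) + k * (Real.pi / 2 - m * (Real.pi / 2))) + Real.pi / 2 := by
      push_cast; ring
    rw [e, Real.cos_add_pi_div_two, Real.sin_add_pi_div_two]
    ring

/-- If the support function `p` is a trigonometric polynomial of
degree at most `N` with top harmonic `q`, and `E` is the evolute operator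
`(E u)(α) = u'(α − π/2)`, then the `N⁻ᵏ`-rescaled iterated evolutes of `p`
converge uniformly to those of `q`, and each rescaled `E^[k] q` is a pure harmonic
of order `N` of amplitude `√(a_N² + b_N²)`. -/
theorem stmt_2 (N : ℕ) (hN : 1 ≤ N) (a b : ℕ → ℝ) (p q : ℝ → ℝ)
    (hp : ∀ α : ℝ, p α =
      ∑ m ∈ Finset.range (N + 1), (a m * Real.cos (m * α) + b m * Real.sin (m * α)))
    (hq : ∀ α : ℝ, q α = a N * Real.cos (N * α) + b N * Real.sin (N * α))
    (E : (ℝ → ℝ) → (ℝ → ℝ))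
    (hE : ∀ (u : ℝ → ℝ) (α : ℝ), E u α = deriv u (α - Real.pi / 2)) :
    Tendsto
      (fun k : ℕ => ⨆ α : ℝ, |(E^[k] p) α / (N : ℝ) ^ k - (E^[k] q) α / (N : ℝ) ^ k|)
      atTop (nhds 0) ∧
    ∀ k : ℕ, ∃ c d : ℝ, c ^ 2 + d ^ 2 = (a N) ^ 2 + (b N) ^ 2 ∧
      ∀ α : ℝ, (E^[k] q) α / (N : ℝ) ^ k = c * Real.cos (N * α) + d * Real.sin (N * α) := by
  have hP := iter_formula E hE (Finset.range (N + 1)) a b p hp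
  have hQ := iter_formula E hE {N} a b q (by simpa using hq)
  simp only [Finset.sum_singleton] at hQ
  have hN0 : (0 : ℝ) < N := by exact_mod_cast hN
  constructor
  · have hlim : Tendsto (fun k : ℕ => ∑ m ∈ Finset.range N,
        ((m : ℝ) / N) ^ k * (|a m| + |b m|)) atTop (nhds 0) := by
      have : (0 : ℝ) = ∑ m ∈ Finset.range N, 0 * (|a m| + |b m|) := by simp
      rw [this]
      apply tendsto_finsetSum
      intro m hm
      apply Tendsto.mul_const
      apply tendsto_pow_atTop_nhds_zero_of_lt_one (by positivity)
      rw [div_lt_one hN0]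
      exact_mod_cast Finset.mem_range.mp hm
    refine squeeze_zero (fun k => Real.iSup_nonneg fun α => abs_nonneg _) (fun k => ?_) hlim
    apply ciSup_le
    intro α
    rw [hP, hQ, Finset.sum_range_succ, ← sub_div, add_sub_cancel_right, Finset.sum_div]
    refine (Finset.abs_sum_le_sum_abs _ _).trans (Finset.sum_le_sum fun m _ => ?_)
    rw [mul_div_right_comm, ← div_pow, abs_mul, abs_of_nonneg (by positivity : 0 ≤ ((m : ℝ) / N) ^ k)]
    refine mul_le_mul_of_nonneg_left ?_ (by positivity)
    refine (abs_add_le _ _).trans (add_le_add ?_ ?_)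
    · rw [abs_mul]
      exact mul_le_of_le_one_right (abs_nonneg _) (Real.abs_cos_le_one _)
    · rw [abs_mul]
      exact mul_le_of_le_one_right (abs_nonneg _) (Real.abs_sin_le_one _)
  · intro k
    set φ : ℝ := k * (Real.pi / 2 - N * (Real.pi / 2)) with hφ
    refine ⟨a N * Real.cos φ + b N * Real.sin φ, b N * Real.cos φ - a N * Real.sin φ, ?_, ?_⟩
    · linear_combination ((a N) ^ 2 + (b N) ^ 2) * Real.sin_sq_add_cos_sq φ
    · intro α
      rw [hQ, mul_div_cancel_left₀ _ (by positivity), ← hφ, Real.cos_add, Real.sin_add]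
      ring
end

section
/- Let p : ℝ → ℝ be continuous and 2π-periodic with ∫₀^{2π} p(t) dt = 0, ∫₀^{2π} p(t)·cos t dt = 0 and ∫₀^{2π} p(t)·sin t dt = 0. Define a sequence of functions by q₀ = p and q_{k+1}(α) = F_k(α) − (1/2π)·∫₀^{2π} F_k(s) ds, where F_k(α) = ∫₀^{α} q_k(t + π/2) dt. (Each q_{k+1} is the support function of the evolvent — the unique zero-signed-length involute — of the curve with support function q_k.) Then sup_{α ∈ ℝ} |q_k(α)| → 0 as k → ∞; i.e. the iterated evolvents of a hedgehog converge to its Steiner point, placed here at the origin. -/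
open Real Filter

/-- complex Fourier coefficient (unnormalized) -/
noncomputable def evFC (f : ℝ → ℝ) (n : ℤ) : ℂ :=
  ∫ t in (0 : ℝ)..(2 * Real.pi), Complex.exp (-((n : ℂ) * t * Complex.I)) * (f t : ℂ)

theorem ev_shift {E : Type*} [NormedAddCommGroup E] [NormedSpace ℝ E] (F : ℝ → E)
    (hF : Function.Periodic F (2 * Real.pi)) (d : ℝ) :
    ∫ t in (0 : ℝ)..(2 * Real.pi), F (t + d) = ∫ t in (0 : ℝ)..(2 * Real.pi), F t := by
  rw [intervalIntegral.integral_comp_add_right]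
  have := hF.intervalIntegral_add_eq d 0
  rw [zero_add] at this
  rw [zero_add, add_comm (2 * Real.pi) d, this]

theorem ev_step (g h : ℝ → ℝ) (hg : Continuous g) (hper : Function.Periodic g (2 * Real.pi))
    (h0 : ∫ t in (0 : ℝ)..(2 * Real.pi), g t = 0)
    (hh : ∀ α : ℝ, h α = (∫ t in (0 : ℝ)..α, g (t + Real.pi / 2)) -
        (1 / (2 * Real.pi)) *
          ∫ s in (0 : ℝ)..(2 * Real.pi), (∫ t in (0 : ℝ)..s, g (t + Real.pi / 2))) :
    (∀ x, HasDerivAt h (g (x + Real.pi / 2)) x) ∧ Continuous h ∧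
      Function.Periodic h (2 * Real.pi) ∧ ∫ t in (0 : ℝ)..(2 * Real.pi), h t = 0 := by
  have hgc : Continuous fun t => g (t + Real.pi / 2) := by fun_prop
  have hd : ∀ x, HasDerivAt (fun α => ∫ t in (0 : ℝ)..α, g (t + Real.pi / 2))
      (g (x + Real.pi / 2)) x := fun x => hgc.integral_hasStrictDerivAt 0 x |>.hasDerivAt
  have hF : Continuous (fun α => ∫ t in (0 : ℝ)..α, g (t + Real.pi / 2)) :=
    continuous_iff_continuousAt.2 fun x => (hd x).continuousAt
  have hfun : h = fun α => (∫ t in (0 : ℝ)..α, g (t + Real.pi / 2)) -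
        (1 / (2 * Real.pi)) *
          ∫ s in (0 : ℝ)..(2 * Real.pi), (∫ t in (0 : ℝ)..s, g (t + Real.pi / 2)) := funext hh
  refine ⟨?_, ?_, ?_, ?_⟩
  · intro x
    rw [hfun]
    exact (hd x).sub_const _
  · rw [hfun]
    exact hF.sub continuous_const
  · intro x
    rw [hh, hh]
    congr 1
    rw [← intervalIntegral.integral_add_adjacent_intervals (b := x)
      (hgc.intervalIntegrable _ _) (hgc.intervalIntegrable _ _)]
    have hp' : Function.Periodic (fun t => g (t + Real.pi / 2)) (2 * Real.pi) := by
      intro t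
      have := hper (t + Real.pi / 2)
      simp only
      rw [← this]; ring_nf
    have h1 := hp'.intervalIntegral_add_eq x 0
    rw [zero_add, ev_shift g hper, h0] at h1
    rw [h1, add_zero]
  · rw [hfun, intervalIntegral.integral_sub (hF.intervalIntegrable _ _)
      (continuous_const.intervalIntegrable _ _), intervalIntegral.integral_const]
    have := Real.pi_pos
    simp only [smul_eq_mul]
    field_simp
    ring

theorem ev_exp_per (n : ℤ) (t : ℝ) :
    Complex.exp (-((n : ℂ) * ((t + 2 * Real.pi : ℝ) : ℂ) * Complex.I)) =
      Complex.exp (-((n : ℂ) * t * Complex.I)) := by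
  rw [Complex.exp_eq_exp_iff_exists_int]
  refine ⟨-n, ?_⟩
  push_cast
  ring

theorem ev_norm_step (g h : ℝ → ℝ) (hg : Continuous g)
    (hper : Function.Periodic g (2 * Real.pi))
    (hd : ∀ x, HasDerivAt h (g (x + Real.pi / 2)) x)
    (hperh : Function.Periodic h (2 * Real.pi)) (n : ℤ) :
    |(n : ℝ)| * ‖evFC h n‖ = ‖evFC g n‖ := by
  have hE : ∀ x : ℝ, HasDerivAt (fun t : ℝ => Complex.exp (-((n : ℂ) * t * Complex.I)))
      (-((n : ℂ) * Complex.I) * Complex.exp (-((n : ℂ) * x * Complex.I))) x := by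
    intro x
    have h1 : HasDerivAt (fun t : ℝ => (t : ℂ)) 1 x := Complex.ofRealCLM.hasDerivAt
    have := (((h1.const_mul (n : ℂ)).mul_const Complex.I).fun_neg).cexp
    convert this using 1
    ring
  have hv : ∀ x : ℝ, HasDerivAt (fun t : ℝ => (h t : ℂ)) ((g (x + Real.pi / 2) : ℝ) : ℂ) x :=
    fun x => (hd x).ofReal_comp
  have ibp := intervalIntegral.integral_mul_deriv_eq_deriv_mul (a := 0) (b := 2 * Real.pi)
    (fun x _ => hE x) (fun x _ => hv x)
    (Continuous.intervalIntegrable (by fun_prop) _ _)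
    (Continuous.intervalIntegrable (by fun_prop) _ _)
  have e1 := ev_exp_per n 0
  have e2 := hperh 0
  rw [zero_add] at e1 e2
  rw [e1, e2, sub_self, zero_sub] at ibp
  have ibp2 : (∫ x in (0:ℝ)..2 * Real.pi, Complex.exp (-((n : ℂ) * x * Complex.I)) *
      ((g (x + Real.pi / 2) : ℝ) : ℂ)) = (n : ℂ) * Complex.I * evFC h n := by
    rw [ibp, evFC, ← intervalIntegral.integral_const_mul, ← intervalIntegral.integral_neg]
    congr 1; ext x; ring
  have sh := ev_shift (fun t : ℝ => Complex.exp (-((n : ℂ) * t * Complex.I)) * (g t : ℂ))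
    (by intro t; simp only; rw [ev_exp_per, hper]) (Real.pi / 2)
  have sh2 : evFC g n = Complex.exp (((-(n * (Real.pi / 2)) : ℝ) : ℂ) * Complex.I) *
      ((n : ℂ) * Complex.I * evFC h n) := by
    rw [← ibp2, ← intervalIntegral.integral_const_mul, evFC, ← sh]
    congr 1; ext x
    rw [← mul_assoc, ← Complex.exp_add]
    congr 2
    push_cast; ring
  rw [sh2, norm_mul, Complex.norm_exp_ofReal_mul_I, norm_mul, norm_mul, Complex.norm_I,
    Complex.norm_intCast]
  ring

theorem ev_sup_bound (f : ℝ → ℝ) (hf : Continuous f) (hper : Function.Periodic f (2 * Real.pi))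
    (B : ℝ) (hB : ∀ n : ℤ, ‖evFC f n‖ ≤ B * (1 / (n : ℝ) ^ 2)) (x : ℝ) :
    |f x| ≤ B * ∑' n : ℤ, 1 / (n : ℝ) ^ 2 := by
  haveI : Fact (0 < 2 * Real.pi) := ⟨Real.two_pi_pos⟩
  have hs : Summable fun n : ℤ => B * (1 / (n : ℝ) ^ 2) :=
    (Real.summable_one_div_int_pow.2 (by norm_num)).mul_left B
  have hperC : Function.Periodic (fun t => (f t : ℂ)) (2 * Real.pi) := fun t => by
    simp only; rw [hper]
  let F : C(AddCircle (2 * Real.pi), ℂ) :=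
    ⟨hperC.lift, continuous_coinduced_dom.mpr (by
      change Continuous (fun t => (f t : ℂ))
      fun_prop)⟩
  have hco : ∀ n, ‖fourierCoeff F n‖ ≤ B * (1 / (n : ℝ) ^ 2) := by
    intro n
    refine le_trans ?_ (hB n)
    have : fourierCoeff F n = ((1 / (2 * Real.pi) : ℝ) : ℂ) * evFC f n := by
      rw [fourierCoeff_eq_intervalIntegral _ n 0, zero_add, evFC, Complex.real_smul]
      congr 2
      ext t
      rw [fourier_coe_apply, smul_eq_mul]
      congr 2
      have : (Real.pi : ℂ) ≠ 0 := by exact_mod_cast Real.pi_ne_zero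
      push_cast
      field_simp
    rw [this, norm_mul, Complex.norm_real]
    have : ‖1 / (2 * Real.pi)‖ ≤ 1 := by
      rw [Real.norm_of_nonneg (by positivity), div_le_one (by positivity)]
      linarith [Real.pi_gt_three]
    exact mul_le_of_le_one_left (norm_nonneg _) this
  have hsum : Summable (fourierCoeff F) := Summable.of_norm_bounded hs hco
  have hx := has_pointwise_sum_fourier_series_of_summable hsum (x : AddCircle (2 * Real.pi))
  have hFx : F (x : AddCircle (2 * Real.pi)) = (f x : ℂ) := rfl
  rw [← tsum_mul_left, ← Real.norm_eq_abs, ← Complex.norm_real, ← hFx, ← hx.tsum_eq]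
  refine tsum_of_norm_bounded hs.hasSum fun n => ?_
  rw [norm_smul]
  refine le_trans ?_ (hco n)
  have : ‖fourier n (x : AddCircle (2 * Real.pi))‖ ≤ 1 := by
    rw [fourier_apply]; exact (Circle.norm_coe _).le
  exact mul_le_of_le_one_right (norm_nonneg _) this

theorem ev_bound0 (p : ℝ → ℝ) (n : ℤ) (hp : Continuous p) :
    ‖evFC p n‖ ≤ ∫ t in (0 : ℝ)..(2 * Real.pi), |p t| := by
  refine (intervalIntegral.norm_integral_le_integral_norm Real.two_pi_pos.le).trans_eq ?_
  congr 1; ext t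
  rw [norm_mul, Complex.norm_real, Real.norm_eq_abs]
  have : -((n : ℂ) * t * Complex.I) = ((-(n * t) : ℝ) : ℂ) * Complex.I := by push_cast; ring
  rw [this, Complex.norm_exp_ofReal_mul_I, one_mul]

theorem ev_pm (p : ℝ → ℝ) (hp : Continuous p)
    (hc : ∫ t in (0 : ℝ)..(2 * Real.pi), p t * Real.cos t = 0)
    (hs : ∫ t in (0 : ℝ)..(2 * Real.pi), p t * Real.sin t = 0) (n : ℤ) (hn : n = 1 ∨ n = -1) :
    evFC p n = 0 := by
  have key : evFC p n = ((∫ t in (0 : ℝ)..(2 * Real.pi), p t * Real.cos t : ℝ) : ℂ) -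
      (n : ℂ) * Complex.I * ((∫ t in (0 : ℝ)..(2 * Real.pi), p t * Real.sin t : ℝ) : ℂ) := by
    rw [← intervalIntegral.integral_ofReal, ← intervalIntegral.integral_ofReal,
      ← intervalIntegral.integral_const_mul, ← intervalIntegral.integral_sub
        (Continuous.intervalIntegrable (by fun_prop) _ _)
        (Continuous.intervalIntegrable (by fun_prop) _ _), evFC]
    congr 1; ext t
    have : -((n : ℂ) * t * Complex.I) = ((-n * t : ℂ)) * Complex.I := by ring
    rw [this, Complex.exp_mul_I]
    rcases hn with rfl | rfl <;> simp <;> ring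
  rw [key, hc, hs]; simp



/-- Let `p` be continuous, `2π`-periodic, and `L²`-orthogonal to
`1`, `cos` and `sin`. Define iterated evolvents by `q₀ = p` and
`q_{k+1}(α) = ∫₀^α q_k(t + π/2) dt − (1/2π)∫₀^{2π} (∫₀^s q_k(t + π/2) dt) ds`.
Then `sup_α |q_k(α)| → 0`: the iterated evolvents of a hedgehog converge to its
Steiner point (placed at the origin). -/
theorem stmt_3 (p : ℝ → ℝ) (hp : Continuous p)
    (hper : Function.Periodic p (2 * Real.pi))
    (h0 : ∫ t in (0 : ℝ)..(2 * Real.pi), p t = 0)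
    (hc : ∫ t in (0 : ℝ)..(2 * Real.pi), p t * Real.cos t = 0)
    (hs : ∫ t in (0 : ℝ)..(2 * Real.pi), p t * Real.sin t = 0)
    (q : ℕ → ℝ → ℝ) (hq0 : q 0 = p)
    (hq : ∀ (k : ℕ) (α : ℝ), q (k + 1) α =
      (∫ t in (0 : ℝ)..α, q k (t + Real.pi / 2)) -
        (1 / (2 * Real.pi)) *
          ∫ s in (0 : ℝ)..(2 * Real.pi), (∫ t in (0 : ℝ)..s, q k (t + Real.pi / 2))) :
    Tendsto (fun k : ℕ => ⨆ α : ℝ, |q k α|) atTop (nhds 0) := by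
  have H : ∀ k, Continuous (q k) ∧ Function.Periodic (q k) (2 * Real.pi) ∧
      ∫ t in (0 : ℝ)..(2 * Real.pi), q k t = 0 := by
    intro k
    induction k with
    | zero => rw [hq0]; exact ⟨hp, hper, h0⟩
    | succ k ih =>
      exact (ev_step (q k) (q (k + 1)) ih.1 ih.2.1 ih.2.2 (hq k)).2
  have N : ∀ k (n : ℤ), |(n : ℝ)| * ‖evFC (q (k + 1)) n‖ = ‖evFC (q k) n‖ := fun k n =>
    ev_norm_step _ _ (H k).1 (H k).2.1
      (ev_step (q k) (q (k + 1)) (H k).1 (H k).2.1 (H k).2.2 (hq k)).1 (H (k + 1)).2.1 n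
  set M := ∫ t in (0 : ℝ)..(2 * Real.pi), |p t| with hM
  have hM0 : 0 ≤ M := intervalIntegral.integral_nonneg Real.two_pi_pos.le fun _ _ => abs_nonneg _
  have Z : ∀ k, evFC (q k) 0 = 0 := by
    intro k
    have : evFC (q k) 0 = ((∫ t in (0 : ℝ)..(2 * Real.pi), q k t : ℝ) : ℂ) := by
      rw [← intervalIntegral.integral_ofReal, evFC]
      simp
    rw [this, (H k).2.2]; simp
  have P : ∀ (n : ℤ), (n = 1 ∨ n = -1) → ∀ k, evFC (q k) n = 0 := by
    intro n hn k
    induction k with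
    | zero => rw [hq0]; exact ev_pm p hp hc hs n hn
    | succ k ih =>
      have := N k n
      rw [ih] at this
      rcases hn with rfl | rfl <;> simpa using this
  have D : ∀ k (n : ℤ), ‖evFC (q (k + 2)) n‖ ≤ (M * (1 / 2) ^ k) * (1 / (n : ℝ) ^ 2) := by
    intro k n
    by_cases hn : n = 0
    · subst hn; rw [Z]; simp
    by_cases hn1 : n = 1 ∨ n = -1
    · rw [P n hn1, norm_zero]; positivity
    have h2 : (2 : ℝ) ≤ |(n : ℝ)| := by
      have : (2 : ℤ) ≤ |n| := by
        rw [le_abs]; omega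
      exact_mod_cast this
    induction k with
    | zero =>
      have a := N 0 n
      have b := N 1 n
      have c : ‖evFC (q 0) n‖ ≤ M := by rw [hq0]; exact ev_bound0 p n hp
      rw [pow_zero, mul_one, mul_one_div, le_div_iff₀ (by positivity), ← sq_abs]
      calc _ = |(n : ℝ)| * (|(n : ℝ)| * ‖evFC (q (1 + 1)) n‖) := by ring
        _ = ‖evFC (q 0) n‖ := by rw [b, a]
        _ ≤ M := c
    | succ k ih =>
      have a := N (k + 2) n
      have : 2 * ‖evFC (q (k + 2 + 1)) n‖ ≤ ‖evFC (q (k + 2)) n‖ := by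
        rw [← a]; exact mul_le_mul_of_nonneg_right h2 (norm_nonneg _)
      rw [show k + 1 + 2 = k + 2 + 1 by ring, pow_succ]
      linarith
  rw [← tendsto_add_atTop_iff_nat 2]
  refine squeeze_zero (g := fun k : ℕ => (M * (1 / 2) ^ k) * ∑' n : ℤ, 1 / (n : ℝ) ^ 2)
    (fun k => Real.iSup_nonneg fun _ => abs_nonneg _)
    (fun k => ciSup_le fun x => ev_sup_bound _ (H _).1 (H _).2.1 _ (D k) x) ?_
  have := ((tendsto_pow_atTop_nhds_zero_of_lt_one (r := (1 / 2 : ℝ)) (by norm_num)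
    (by norm_num)).const_mul M).mul_const (∑' n : ℤ, 1 / (n : ℝ) ^ 2)
  simpa using this
end

section
/- Let f : ℝ → ℝ be continuously differentiable and 2π-periodic, and set p(α) = −α·cos α + f(α). Suppose there exist u, v ∈ ℝ such that p'(α − π/2) = p(α) + u·cos α + v·sin α for all α ∈ ℝ (i.e. the curve with support function p differs from its evolute by a parallel translation). Then there exist a, b ∈ ℝ such that f(α) = a·cos α + b·sin α for all α; consequently the curve is a parallel translate of the cycloid with support function −α·cos α. -/
open Real

theorem aux_const (F : ℝ → ℝ) (h : ∀ x, HasDerivAt F 0 x) (x y : ℝ) : F x = F y :=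
  is_const_of_deriv_eq_zero (fun z => (h z).differentiableAt) (fun z => (h z).deriv) x y

/-- A periodic solution of `y' = c y`, `c ≠ 0`, vanishes. -/
theorem aux_exp (c : ℝ) (hc : c ≠ 0) (y : ℝ → ℝ) (h : ∀ x, HasDerivAt y (c * y x) x)
    (hper : ∀ x, y (x + 2 * Real.pi) = y x) (x : ℝ) : y x = 0 := by
  have h1 : ∀ x, HasDerivAt (fun x => Real.exp (-c * x) * y x) 0 x := by
    intro x
    have e : HasDerivAt (fun x : ℝ => Real.exp (-c * x)) (Real.exp (-c * x) * (-c * 1)) x :=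
      ((hasDerivAt_id x).const_mul (-c)).exp
    have key := e.mul (h x)
    refine key.congr_deriv ?_
    try beta_reduce
    ring
  have h2 := aux_const _ h1 (x + 2 * Real.pi) x
  simp only [hper] at h2
  by_contra hne
  have h3 := Real.exp_injective (mul_right_cancel₀ hne h2)
  have h4 := mul_left_cancel₀ (neg_ne_zero.mpr hc) h3
  linarith [Real.pi_pos]

/-- Let `f` be `C¹` and `2π`-periodic, and `p(α) = −α·cos α + f(α)`.
If the curve with support function `p` differs from its evolute by a parallel
translation, i.e. `p'(α − π/2) = p(α) + u·cos α + v·sin α` for some `u, v`,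
then `f` is a first harmonic: the curve is a translate of the cycloid. -/
theorem stmt_4 (f : ℝ → ℝ) (hf : ContDiff ℝ 1 f)
    (hper : Function.Periodic f (2 * Real.pi))
    (p : ℝ → ℝ) (hp : ∀ α : ℝ, p α = -α * Real.cos α + f α)
    (u v : ℝ)
    (heq : ∀ α : ℝ, deriv p (α - Real.pi / 2) = p α + u * Real.cos α + v * Real.sin α) :
    ∃ a b : ℝ, ∀ α : ℝ, f α = a * Real.cos α + b * Real.sin α := by
  obtain ⟨A, hA⟩ : ∃ A, A = u - Real.pi / 2 := ⟨_, rfl⟩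
  obtain ⟨B, hB⟩ : ∃ B, B = v + 1 := ⟨_, rfl⟩
  have hper' : ∀ x, f (x + 2 * Real.pi) = f x := hper
  -- the functional differential equation for `f`
  have hd : ∀ x, HasDerivAt f (f (x + Real.pi / 2) - A * Real.sin x + B * Real.cos x) x := by
    intro x
    have hfd : HasDerivAt f (deriv f x) x :=
      (hf.differentiable (by norm_num) x).hasDerivAt
    have hpd : HasDerivAt p (-1 * Real.cos x + -x * -Real.sin x + deriv f x) x := by
      have e : p = fun α => -α * Real.cos α + f α := funext hp
      rw [e]
      exact (((hasDerivAt_id x).neg).mul (Real.hasDerivAt_cos x)).add hfd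
    have h := heq (x + Real.pi / 2)
    rw [add_sub_cancel_right, hpd.deriv, hp, Real.cos_add_pi_div_two,
      Real.sin_add_pi_div_two] at h
    have key := hfd
    refine key.congr_deriv ?_
    try beta_reduce
    rw [hA, hB]
    linarith
  have hshift : ∀ c x, HasDerivAt (fun x => f (x + c))
      (f (x + c + Real.pi / 2) - A * Real.sin (x + c) + B * Real.cos (x + c)) x := by
    intro c x
    exact (hd (x + c)).comp_add_const x c
  -- `w = f(x) + f(x+π)` vanishes
  obtain ⟨w, hw⟩ : ∃ w : ℝ → ℝ, w = fun x => f x + f (x + Real.pi) := ⟨_, rfl⟩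
  have hwd : ∀ x, HasDerivAt w (w (x + Real.pi / 2)) x := by
    intro x
    rw [hw]
    have key := (hd x).add (hshift Real.pi x)
    refine key.congr_deriv ?_
    try beta_reduce
    simp only [Real.sin_add_pi, Real.cos_add_pi]
    rw [show x + Real.pi / 2 + Real.pi = x + Real.pi + Real.pi / 2 by ring]
    ring
  have hwp : ∀ x, w (x + Real.pi) = w x := by
    intro x
    simp only [hw]
    rw [show x + Real.pi + Real.pi = x + 2 * Real.pi by ring, hper']
    ring
  have hwp2 : ∀ x, w (x + 2 * Real.pi) = w x := by
    intro x
    rw [show x + 2 * Real.pi = x + Real.pi + Real.pi by ring, hwp, hwp]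
  have hwd2 : ∀ x, HasDerivAt (fun x => w (x + Real.pi / 2)) (w x) x := by
    intro x
    have h := (hwd (x + Real.pi / 2)).comp_add_const x (Real.pi / 2)
    rwa [show x + Real.pi / 2 + Real.pi / 2 = x + Real.pi by ring, hwp] at h
  have hs : ∀ x, w x + w (x + Real.pi / 2) = 0 := by
    refine aux_exp 1 one_ne_zero (fun x => w x + w (x + Real.pi / 2)) (fun x => ?_) (fun x => ?_)
    · have key := (hwd x).add (hwd2 x)
      refine key.congr_deriv ?_
      try beta_reduce
      ring
    · simp only [hwp2]
      rw [show x + 2 * Real.pi + Real.pi / 2 = x + Real.pi / 2 + 2 * Real.pi by ring, hwp2]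
  have hw0 : ∀ x, w x = 0 := by
    refine aux_exp (-1) (by norm_num) w (fun x => ?_) hwp2
    have key := hwd x
    refine key.congr_deriv ?_
    try beta_reduce
    linarith [hs x]
  have hanti : ∀ x, f (x + Real.pi) = -f x := by
    intro x
    have h := hw0 x
    simp only [hw] at h
    linarith
  -- the derivative `q` of `f`, and `q' = -f - 2 g`
  obtain ⟨q, hq⟩ : ∃ q : ℝ → ℝ,
    q = fun x => f (x + Real.pi / 2) - A * Real.sin x + B * Real.cos x := ⟨_, rfl⟩
  have hfq : ∀ x, HasDerivAt f (q x) x := by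
    intro x
    rw [hq]
    exact hd x
  have hqd : ∀ x, HasDerivAt q (-f x - 2 * (A * Real.cos x + B * Real.sin x)) x := by
    intro x
    rw [hq]
    have key := ((hshift (Real.pi / 2) x).sub ((Real.hasDerivAt_sin x).const_mul A)).add
      ((Real.hasDerivAt_cos x).const_mul B)
    refine key.congr_deriv ?_
    try beta_reduce
    rw [show x + Real.pi / 2 + Real.pi / 2 = x + Real.pi by ring, hanti,
      Real.cos_add_pi_div_two, Real.sin_add_pi_div_two]
    ring
  have hqp : ∀ x, q (x + 2 * Real.pi) = q x := by
    intro x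
    simp only [hq, Real.sin_add_two_pi, Real.cos_add_two_pi]
    rw [show x + 2 * Real.pi + Real.pi / 2 = x + Real.pi / 2 + 2 * Real.pi by ring, hper']
  have hF : ∀ x, HasDerivAt (fun x => q x * Real.cos x + f x * Real.sin x
      + A * (x + Real.sin x * Real.cos x) + B * (Real.sin x * Real.sin x)) 0 x := by
    intro x
    have s := Real.hasDerivAt_sin x
    have c := Real.hasDerivAt_cos x
    have key := ((((hqd x).mul c).add ((hfq x).mul s)).add
      (((hasDerivAt_id x).add (s.mul c)).const_mul A)).add ((s.mul s).const_mul B)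
    refine key.congr_deriv ?_
    try beta_reduce
    linear_combination (-A) * Real.sin_sq_add_cos_sq x
  have hK : ∀ x, HasDerivAt (fun x => f x * Real.cos x - q x * Real.sin x
      - A * (Real.sin x * Real.sin x) - B * (x - Real.sin x * Real.cos x)) 0 x := by
    intro x
    have s := Real.hasDerivAt_sin x
    have c := Real.hasDerivAt_cos x
    have key := ((((hfq x).mul c).sub ((hqd x).mul s)).sub
      ((s.mul s).const_mul A)).sub (((hasDerivAt_id x).sub (s.mul c)).const_mul B)
    refine key.congr_deriv ?_
    try beta_reduce
    linear_combination B * Real.sin_sq_add_cos_sq x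
  have hA0 : A = 0 := by
    have h := aux_const _ hF (0 + 2 * Real.pi) 0
    simp only [hqp, hper', Real.sin_add_two_pi, Real.cos_add_two_pi] at h
    have h' : A * Real.pi = 0 := by linarith
    exact (mul_eq_zero.mp h').resolve_right Real.pi_ne_zero
  have hB0 : B = 0 := by
    have h := aux_const _ hK (0 + 2 * Real.pi) 0
    simp only [hqp, hper', Real.sin_add_two_pi, Real.cos_add_two_pi] at h
    have h' : B * Real.pi = 0 := by linarith
    exact (mul_eq_zero.mp h').resolve_right Real.pi_ne_zero
  refine ⟨f 0, q 0, fun x => ?_⟩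
  have h1 := aux_const _ hF x 0
  have h2 := aux_const _ hK x 0
  simp only [hA0, hB0, Real.sin_zero, Real.cos_zero] at h1 h2
  linear_combination Real.sin x * h1 + Real.cos x * h2 - f x * Real.sin_sq_add_cos_sq x
end

section
/- Let n ≥ 3, let R : ℝ² → ℝ² be the rotation about the origin by 2π/n, let σ : ℝⁿ → ℝⁿ be the cyclic shift (σp)_j = p_{j−1} (indices mod n), and let C, S ∈ ℝⁿ be the vectors C_j = cos(2πj/n), S_j = sin(2πj/n). Suppose f : ℝⁿ → ℝ² is ℝ-linear and satisfies f(σp) = R(f(p)) for all p ∈ ℝⁿ, and f(p + aC + bS) = f(p) + (a, b) for all p ∈ ℝⁿ and a, b ∈ ℝ. Then f(p) = (2/n)·Σ_{j=1}^{n} p_j·(cos(2πj/n), sin(2πj/n)) for all p ∈ ℝⁿ; this is the vertex centroid of the equiangular hedgehog with support numbers p. In particular, any Minkowski-linear, motion-equivariant point assignment on equiangular n-gons is the vertex centroid. -/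
open Real

theorem aux_sum_exp (n : ℕ) (hn : 3 ≤ n) :
    ∑ j : Fin n, Complex.exp (((2 * (2 * Real.pi * (j : ℕ) / n) : ℝ) : ℂ) * Complex.I) = 0 := by
  have hn0 : n ≠ 0 := by omega
  have hnC : (n : ℂ) ≠ 0 := by exact_mod_cast hn0
  have hp := Complex.isPrimitiveRoot_exp n hn0
  set z := Complex.exp (2 * Real.pi * Complex.I / n) with hz
  have h1 : z ^ 2 ≠ 1 := hp.pow_ne_one_of_pos_of_lt (by norm_num) (by omega)
  have h2 : (z ^ 2 - 1) * ∑ k ∈ Finset.range n, (z ^ 2) ^ k = 0 := by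
    rw [mul_geom_sum, ← pow_mul, mul_comm, pow_mul, hp.pow_eq_one]; simp
  have h3 := (mul_eq_zero.mp h2).resolve_left (sub_ne_zero.mpr h1)
  rw [← h3, Finset.sum_range]
  refine Finset.sum_congr rfl fun j _ => ?_
  rw [hz, ← pow_mul, ← Complex.exp_nat_mul]
  congr 1
  push_cast
  field_simp

theorem aux_cos (n : ℕ) (hn : 3 ≤ n) :
    ∑ j : Fin n, Real.cos (2 * (2 * Real.pi * (j : ℕ) / n)) = 0 := by
  have h := congrArg Complex.re (aux_sum_exp n hn)
  rw [Complex.re_sum] at h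
  simpa only [Complex.exp_ofReal_mul_I_re, Complex.zero_re] using h

theorem aux_sin (n : ℕ) (hn : 3 ≤ n) :
    ∑ j : Fin n, Real.sin (2 * (2 * Real.pi * (j : ℕ) / n)) = 0 := by
  have h := congrArg Complex.im (aux_sum_exp n hn)
  rw [Complex.im_sum] at h
  simpa only [Complex.exp_ofReal_mul_I_im, Complex.zero_im] using h

/-- Any linear map `f : ℝⁿ → ℝ²` on support numbers of equiangular
hedgehogs that is equivariant under rotation by `2π/n` (cyclic shift of support
numbers) and under translations (`f(p + aC + bS) = f(p) + (a,b)`) is the vertex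
centroid: `f(p) = (2/n)·Σ_j p_j·(cos(2πj/n), sin(2πj/n))`. -/
theorem stmt_5 (n : ℕ) (hn : 3 ≤ n) [NeZero n]
    (f : (Fin n → ℝ) → ℝ × ℝ) (hlin : IsLinearMap ℝ f)
    (R : ℝ × ℝ → ℝ × ℝ)
    (hR : ∀ v : ℝ × ℝ, R v =
      (Real.cos (2 * Real.pi / n) * v.1 - Real.sin (2 * Real.pi / n) * v.2,
       Real.sin (2 * Real.pi / n) * v.1 + Real.cos (2 * Real.pi / n) * v.2))
    (C S : Fin n → ℝ)
    (hC : ∀ j : Fin n, C j = Real.cos (2 * Real.pi * (j : ℕ) / n))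
    (hS : ∀ j : Fin n, S j = Real.sin (2 * Real.pi * (j : ℕ) / n))
    (hrot : ∀ p : Fin n → ℝ, f (fun j => p (j - 1)) = R (f p))
    (htrans : ∀ (p : Fin n → ℝ) (a b : ℝ), f (p + a • C + b • S) = f p + (a, b)) :
    ∀ p : Fin n → ℝ, f p = (2 / (n : ℝ)) •
      ∑ j : Fin n, p j •
        ((Real.cos (2 * Real.pi * (j : ℕ) / n), Real.sin (2 * Real.pi * (j : ℕ) / n)) : ℝ × ℝ) := by
  have hn0 : (n : ℝ) ≠ 0 := by
    have : n ≠ 0 := by omega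
    exact_mod_cast this
  obtain ⟨x, y, hxy⟩ : ∃ x y : ℝ, f (Pi.single (0 : Fin n) 1) = (x, y) := ⟨_, _, rfl⟩
  have key : ∀ k : ℕ, f (Pi.single (Fin.ofNat n k) 1) =
      (x * Real.cos (2 * Real.pi * k / n) - y * Real.sin (2 * Real.pi * k / n),
       x * Real.sin (2 * Real.pi * k / n) + y * Real.cos (2 * Real.pi * k / n)) := by
    intro k
    induction k with
    | zero =>
      have : Fin.ofNat n 0 = (0 : Fin n) := rfl
      rw [this, hxy]; simp
    | succ k ih =>
      have e : (Pi.single (Fin.ofNat n (k + 1)) 1 : Fin n → ℝ) =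
          fun j => (Pi.single (Fin.ofNat n k) 1 : Fin n → ℝ) (j - 1) := by
        have hk : Fin.ofNat n (k + 1) = Fin.ofNat n k + 1 := by
          apply Fin.ext
          simp [Fin.val_add]
        funext j
        simp only [Pi.single_apply, hk, sub_eq_iff_eq_add]
      have ha : 2 * Real.pi * ((k + 1 : ℕ) : ℝ) / n =
          2 * Real.pi * k / n + 2 * Real.pi / n := by
        push_cast; ring
      rw [e, hrot, hR, ih, ha, Real.cos_add, Real.sin_add]
      ext <;> simp only <;> ring
  have key2 : ∀ j : Fin n, f (Pi.single j 1) =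
      (x * Real.cos (2 * Real.pi * (j : ℕ) / n) - y * Real.sin (2 * Real.pi * (j : ℕ) / n),
       x * Real.sin (2 * Real.pi * (j : ℕ) / n) + y * Real.cos (2 * Real.pi * (j : ℕ) / n)) := by
    intro j
    have := key j
    rwa [Fin.ofNat_val_eq_self] at this
  have expand : ∀ p : Fin n → ℝ, f p = ∑ j : Fin n, p j • f (Pi.single j 1) := by
    intro p
    have h := LinearMap.pi_apply_eq_sum_univ (hlin.mk' f) p
    simp only [IsLinearMap.mk'_apply] at h
    rw [h]
    refine Finset.sum_congr rfl fun j _ => ?_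
    congr 2
    funext i
    simp [Pi.single_apply, eq_comm]
  have hfC : f C = (1, 0) := by
    have h := htrans 0 1 0
    simpa [hlin.map_zero] using h
  have hcc : ∑ j : Fin n, Real.cos (2 * Real.pi * (j : ℕ) / n) ^ 2 = n / 2 := by
    have h := aux_cos n hn
    simp only [Real.cos_two_mul, Finset.sum_sub_distrib, ← Finset.mul_sum] at h
    simp at h
    linarith
  have hcs : ∑ j : Fin n, Real.sin (2 * Real.pi * (j : ℕ) / n) *
      Real.cos (2 * Real.pi * (j : ℕ) / n) = 0 := by
    have h := aux_sin n hn
    simp only [Real.sin_two_mul, mul_assoc (2 : ℝ) (Real.sin _), ← Finset.mul_sum] at h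
    linarith
  have hC' := expand C
  rw [hfC] at hC'
  have hx : x = 2 / n := by
    have h := congrArg Prod.fst hC'
    rw [Prod.fst_sum] at h
    have e : ∑ j : Fin n, (C j • f (Pi.single j 1)).1 = x * (n / 2) - y * 0 := by
      rw [← hcc, ← hcs, Finset.mul_sum, Finset.mul_sum, ← Finset.sum_sub_distrib]
      refine Finset.sum_congr rfl fun j _ => ?_
      rw [key2, hC, Prod.smul_fst, smul_eq_mul]; ring
    rw [e] at h
    simp only at h
    field_simp
    linarith
  have hy : y = 0 := by
    have h := congrArg Prod.snd hC'
    rw [Prod.snd_sum] at h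
    have e : ∑ j : Fin n, (C j • f (Pi.single j 1)).2 = x * 0 + y * (n / 2) := by
      rw [← hcc, ← hcs, Finset.mul_sum, Finset.mul_sum, ← Finset.sum_add_distrib]
      refine Finset.sum_congr rfl fun j _ => ?_
      rw [key2, hC, Prod.smul_snd, smul_eq_mul]; ring
    rw [e] at h
    have h' : y * (n / 2) = 0 := by simpa using h.symm
    exact (mul_eq_zero.mp h').resolve_right (by positivity)
  intro p
  rw [expand p, Finset.smul_sum]
  refine Finset.sum_congr rfl fun j _ => ?_
  rw [key2, hx, hy]
  ext <;> simp <;> ring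
end

section
/- Let n ≥ 3, let α_1, …, α_n ∈ ℝ (indices mod n) satisfy sin(α_{j+1} − α_j) ≠ 0 for all j, and let p_1, …, p_n ∈ ℝ. For each j let V_j be the unique common point of the lines ℓ(α_j, p_j) and ℓ(α_{j+1}, p_{j+1}). Set θ_{i−1/2} = α_i − α_{i−1} and θ_{i+1/2} = α_{i+1} − α_i. Then for every i with V_{i−1} ≠ V_i, the perpendicular bisector of the segment [V_{i−1}, V_i] is exactly the line ℓ(α_i + π/2, p*_i), where p*_i = (p_{i+1}·sin θ_{i−1/2} − p_{i−1}·sin θ_{i+1/2} + p_i·sin(θ_{i+1/2} − θ_{i−1/2})) / (2·sin θ_{i−1/2}·sin θ_{i+1/2}). Hence the sides of the perpendicular-bisector evolute of the polygon with sides ℓ(α_j, p_j) are the lines ℓ(α_j + π/2, p*_j). -/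
open Real

/-- The cooriented line with normal angle `α` and signed distance `p` from the origin. -/
def line (α p : ℝ) : Set (ℝ × ℝ) :=
  {x : ℝ × ℝ | x.1 * Real.cos α + x.2 * Real.sin α = p}

lemma bis_aux (a b d p q r : ℝ) (A B : ℝ × ℝ) (h1 : Real.sin (b - a) ≠ 0)
    (h2 : Real.sin (d - b) ≠ 0) (hA1 : A ∈ line a q) (hA2 : A ∈ line b p)
    (hB1 : B ∈ line b p) (hB2 : B ∈ line d r) (hne : A ≠ B) :
    {x : ℝ × ℝ | (x.1 - A.1) ^ 2 + (x.2 - A.2) ^ 2 = (x.1 - B.1) ^ 2 + (x.2 - B.2) ^ 2} =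
      line (b + Real.pi / 2)
        ((r * Real.sin (b - a) - q * Real.sin (d - b) + p * Real.sin ((d - b) - (b - a))) /
          (2 * Real.sin (b - a) * Real.sin (d - b))) := by
  obtain ⟨A1, A2⟩ := A
  obtain ⟨B1, B2⟩ := B
  simp only [line, Set.mem_setOf_eq] at hA1 hA2 hB1 hB2
  have hcs := Real.sin_sq_add_cos_sq b
  obtain ⟨t, ht⟩ : ∃ t, t = -A1 * Real.sin b + A2 * Real.cos b := ⟨_, rfl⟩
  obtain ⟨u, hu⟩ : ∃ u, u = -B1 * Real.sin b + B2 * Real.cos b := ⟨_, rfl⟩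
  have eA1 : A1 = p * Real.cos b - t * Real.sin b := by
    rw [ht, ← hA2]; linear_combination (-A1) * hcs
  have eA2 : A2 = p * Real.sin b + t * Real.cos b := by
    rw [ht, ← hA2]; linear_combination (-A2) * hcs
  have eB1 : B1 = p * Real.cos b - u * Real.sin b := by
    rw [hu, ← hB1]; linear_combination (-B1) * hcs
  have eB2 : B2 = p * Real.sin b + u * Real.cos b := by
    rw [hu, ← hB1]; linear_combination (-B2) * hcs
  have htu : t - u ≠ 0 := by
    intro h
    apply hne
    have : t = u := by linarith
    rw [eA1, eA2, eB1, eB2, this]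
  have et : t * Real.sin (b - a) = p * Real.cos (b - a) - q := by
    rw [← hA1, eA1, eA2, Real.sin_sub, Real.cos_sub]; ring
  have eu : u * Real.sin (d - b) = r - p * Real.cos (d - b) := by
    rw [← hB2, eB1, eB2, Real.sin_sub, Real.cos_sub]; ring
  have key : (r * Real.sin (b - a) - q * Real.sin (d - b) + p * Real.sin ((d - b) - (b - a))) /
          (2 * Real.sin (b - a) * Real.sin (d - b)) = (t + u) / 2 := by
    rw [Real.sin_sub (d - b) (b - a), div_eq_div_iff (by positivity) two_ne_zero]
    linear_combination (-2 * Real.sin (d - b)) * et - 2 * Real.sin (b - a) * eu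
  rw [key]
  ext ⟨x, y⟩
  simp only [line, Set.mem_setOf_eq, Real.cos_add_pi_div_two, Real.sin_add_pi_div_two]
  have main : (x - A1) ^ 2 + (y - A2) ^ 2 - ((x - B1) ^ 2 + (y - B2) ^ 2) =
      (t - u) * (-2 * (x * -Real.sin b + y * Real.cos b - (t + u) / 2)) := by
    rw [eA1, eA2, eB1, eB2]
    linear_combination (t ^ 2 - u ^ 2) * hcs
  rw [← sub_eq_zero, main, ← sub_eq_zero (b := (t + u) / 2)]
  simp [htu]

/-- For a cooriented polygon with sides `ℓ(α_j, p_j)` and vertices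
`V_j = ℓ(α_j,p_j) ∩ ℓ(α_{j+1},p_{j+1})`, the perpendicular bisector of the side
`[V_{i−1}, V_i]` (when the endpoints differ) is exactly the line
`ℓ(α_i + π/2, p*_i)` with
`p*_i = (p_{i+1} sin θ_{i−1/2} − p_{i−1} sin θ_{i+1/2} + p_i sin(θ_{i+1/2} − θ_{i−1/2}))
        / (2 sin θ_{i−1/2} sin θ_{i+1/2})`. -/
theorem stmt_6 (n : ℕ) (hn : 3 ≤ n) [NeZero n] (α p : Fin n → ℝ)
    (hsin : ∀ j : Fin n, Real.sin (α (j + 1) - α j) ≠ 0)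
    (V : Fin n → ℝ × ℝ)
    (hV : ∀ j : Fin n, V j ∈ line (α j) (p j) ∧ V j ∈ line (α (j + 1)) (p (j + 1))) :
    ∀ i : Fin n, V (i - 1) ≠ V i →
      {x : ℝ × ℝ |
          (x.1 - (V (i - 1)).1) ^ 2 + (x.2 - (V (i - 1)).2) ^ 2 =
          (x.1 - (V i).1) ^ 2 + (x.2 - (V i).2) ^ 2} =
        line (α i + Real.pi / 2)
          ((p (i + 1) * Real.sin (α i - α (i - 1)) -
              p (i - 1) * Real.sin (α (i + 1) - α i) +
              p i * Real.sin ((α (i + 1) - α i) - (α i - α (i - 1)))) /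
            (2 * Real.sin (α i - α (i - 1)) * Real.sin (α (i + 1) - α i))) := by
  intro i hne
  have h1 := hsin (i - 1)
  have h2 := hV (i - 1)
  rw [sub_add_cancel] at h1 h2
  exact bis_aux _ _ _ _ _ _ _ _ h1 (hsin i) h2.1 h2.2 (hV i).1 (hV i).2 hne
end

section
/- Let n ≥ 3, 0 ≤ m ≤ n−1, a, b ∈ ℝ, and consider the discrete hypocycloid of order m: the equiangular polygon whose j-th side is the line ℓ(2πj/n, p_j) with p_j = a·cos(2πmj/n) + b·sin(2πmj/n). Its perpendicular-bisector evolute has sides ℓ(2πj/n + π/2, p*_j) with p*_j = (p_{j+1} − p_{j−1})/(2·sin(2π/n)) (indices mod n), and for every j one has p*_j = (sin(2πm/n)/sin(2π/n)) · (−a·sin(m·(β_j − π/2)) + b·cos(m·(β_j − π/2))), where β_j = 2πj/n + π/2. Since the evolute of the smooth hypocycloid with support function h(β) = a·cos(mβ) + b·sin(mβ) has support function m·(−a·sin(m(β−π/2)) + b·cos(m(β−π/2))), every side of the P-evolute of the discrete hypocycloid is tangent to the evolute of h scaled by the factor sin(2πm/n)/(m·sin(2π/n)) about its center. -/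
open Real

theorem aux_angle (n m : ℕ) (hn : 3 ≤ n) (k : ℕ) (N q : ℤ) (h : (k : ℤ) = N + n * q) :
    Real.cos (2 * Real.pi * m * k / n) = Real.cos (2 * Real.pi * m * N / n) ∧
    Real.sin (2 * Real.pi * m * k / n) = Real.sin (2 * Real.pi * m * N / n) := by
  have hn0 : (n : ℝ) ≠ 0 := by
    have : n ≠ 0 := by omega
    exact_mod_cast this
  have hk : (k : ℝ) = N + n * q := by exact_mod_cast h
  have e : 2 * Real.pi * m * k / n
      = 2 * Real.pi * m * N / n + ((m * q : ℤ) : ℝ) * (2 * Real.pi) := by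
    rw [hk]; push_cast; field_simp
  rw [e]
  exact ⟨Real.cos_add_int_mul_two_pi _ _, Real.sin_add_int_mul_two_pi _ _⟩

/-- The perpendicular-bisector evolute of the discrete hypocycloid
of order `m` with support numbers `p_j = a cos(2πmj/n) + b sin(2πmj/n)` has support
numbers `p*_j = (p_{j+1} − p_{j−1})/(2 sin(2π/n))`, and these satisfy
`p*_j = (sin(2πm/n)/sin(2π/n))·(−a sin(m(β_j − π/2)) + b cos(m(β_j − π/2)))` with
`β_j = 2πj/n + π/2`: every side of the evolute is tangent to the evolute of the
smooth hypocycloid scaled by `sin(2πm/n)/(m sin(2π/n))`. -/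
theorem stmt_9 (n m : ℕ) (hn : 3 ≤ n) (hm : m ≤ n - 1) [NeZero n] (a b : ℝ)
    (p pstar : Fin n → ℝ)
    (hp : ∀ j : Fin n, p j =
      a * Real.cos (2 * Real.pi * m * (j : ℕ) / n) + b * Real.sin (2 * Real.pi * m * (j : ℕ) / n))
    (hps : ∀ j : Fin n, pstar j = (p (j + 1) - p (j - 1)) / (2 * Real.sin (2 * Real.pi / n)))
    (β : Fin n → ℝ)
    (hβ : ∀ j : Fin n, β j = 2 * Real.pi * (j : ℕ) / n + Real.pi / 2) :
    ∀ j : Fin n, pstar j =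
      (Real.sin (2 * Real.pi * m / n) / Real.sin (2 * Real.pi / n)) *
        (-a * Real.sin (m * (β j - Real.pi / 2)) + b * Real.cos (m * (β j - Real.pi / 2))) := by
  intro j
  have hn0 : (n : ℝ) ≠ 0 := by
    have : n ≠ 0 := by omega
    exact_mod_cast this
  have h1v : ((1 : Fin n) : ℕ) = 1 := by
    rw [Fin.val_one']; exact Nat.mod_eq_of_lt (by omega)
  have hplus : ∃ q : ℤ, (((j + 1 : Fin n) : ℕ) : ℤ) = ((j : ℕ) + 1 : ℤ) + n * q := by
    refine ⟨-(((j : ℕ) + 1 : ℤ) / n), ?_⟩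
    rw [Fin.val_add, h1v]
    push_cast
    have := Int.emod_add_mul_ediv ((j : ℕ) + 1 : ℤ) n
    linarith
  have hminus : ∃ q : ℤ, (((j - 1 : Fin n) : ℕ) : ℤ) = ((j : ℕ) - 1 : ℤ) + n * q := by
    refine ⟨1 - ((n - 1 + (j : ℕ) : ℤ) / n), ?_⟩
    rw [Fin.sub_def, h1v]
    push_cast [Nat.cast_sub (show 1 ≤ n by omega)]
    have := Int.emod_add_mul_ediv (n - 1 + (j : ℕ) : ℤ) n
    linarith
  obtain ⟨q, hq⟩ := hplus
  obtain ⟨r, hr⟩ := hminus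
  obtain ⟨c1, s1⟩ := aux_angle n m hn _ _ _ hq
  obtain ⟨c2, s2⟩ := aux_angle n m hn _ _ _ hr
  rw [hps, hp, hp, c1, s1, c2, s2, hβ]
  have e1 : 2 * Real.pi * m * (((j : ℕ) + 1 : ℤ) : ℝ) / n
      = 2 * Real.pi * m * (j : ℕ) / n + 2 * Real.pi * m / n := by
    push_cast; ring
  have e2 : 2 * Real.pi * m * (((j : ℕ) - 1 : ℤ) : ℝ) / n
      = 2 * Real.pi * m * (j : ℕ) / n - 2 * Real.pi * m / n := by
    push_cast; ring
  have e3 : (m : ℝ) * (2 * Real.pi * (j : ℕ) / n + Real.pi / 2 - Real.pi / 2)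
      = 2 * Real.pi * m * (j : ℕ) / n := by ring
  rw [e1, e2, e3, Real.cos_add, Real.sin_add, Real.cos_sub, Real.sin_sub]
  ring
end

section
/- Let n ≥ 1 and let A be an n×n complex matrix such that Tr(A^k) = 0 for every odd k with 1 ≤ k ≤ n. Then the characteristic polynomial χ_A of A satisfies χ_A(−X) = (−1)ⁿ·χ_A(X); equivalently, the spectrum of A is symmetric with respect to the origin, with opposite eigenvalues having equal algebraic multiplicities. -/
open Polynomial

theorem aux_det_aeval {n : ℕ} (A : Matrix (Fin n) (Fin n) ℂ) (p : ℂ[X]) :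
    (aeval A p).det = (A.charpoly.roots.map (fun x => p.eval x)).prod := by
  have hcard : Multiset.card A.charpoly.roots = n := by
    rw [← (IsAlgClosed.splits A.charpoly).natDegree_eq_card_roots]
    simp
  have hlin : ∀ c : ℂ, (aeval A (X - C c)).det
      = (A.charpoly.roots.map (fun x => (X - C c : ℂ[X]).eval x)).prod := by
    intro c
    have h1 : A.charpoly.eval c = (A.charpoly.roots.map (fun x => c - x)).prod := by
      conv_lhs => rw [(IsAlgClosed.splits A.charpoly).eq_prod_roots_of_monic A.charpoly_monic]
      simp [eval_multiset_prod]
    have h2 : aeval A (X - C c) = - (Matrix.scalar (Fin n) c - A) := by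
      simp [Matrix.algebraMap_eq_diagonal]
    rw [h2, Matrix.det_neg, ← Matrix.eval_charpoly, h1]
    have h3 : (fun x => (X - C c : ℂ[X]).eval x) = fun x => (-1) * (c - x) := by
      funext x; simp
    rw [h3, Multiset.prod_map_mul]
    simp [hcard]
  have hconst : ∀ c : ℂ, (aeval A (C c)).det
      = (A.charpoly.roots.map (fun x => (C c : ℂ[X]).eval x)).prod := by
    intro c
    simp [hcard, Matrix.algebraMap_eq_diagonal]
  have hp := (IsAlgClosed.splits p).eq_prod_roots
  have key : ∀ (s : Multiset ℂ) (c : ℂ), (aeval A (C c * (s.map (fun a => X - C a)).prod)).det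
      = (A.charpoly.roots.map
          (fun x => (C c * (s.map (fun a => X - C a)).prod : ℂ[X]).eval x)).prod := by
    intro s c
    induction s using Multiset.induction_on with
    | empty => simpa using hconst c
    | cons a s ih =>
      have e : (C c * ((a ::ₘ s).map (fun a => X - C a)).prod : ℂ[X])
        = (X - C a) * (C c * (s.map (fun a => X - C a)).prod) := by
        simp only [Multiset.map_cons, Multiset.prod_cons]; ring
      rw [e, map_mul, Matrix.det_mul, ih, hlin]
      simp only [eval_mul (p := X - C a)]
      rw [Multiset.prod_map_mul]
  rw [hp]
  exact key _ _

theorem aux_trace_pow {n : ℕ} (A : Matrix (Fin n) (Fin n) ℂ) (k : ℕ) :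
    (A ^ k).trace = (A.charpoly.roots.map (fun x => x ^ k)).sum := by
  have h : (A ^ k).charpoly = ((A.charpoly.roots.map (fun x => x ^ k)).map
      (fun a => X - C a)).prod := by
    apply Polynomial.funext
    intro z
    have := aux_det_aeval A (C z - X ^ k)
    rw [Matrix.eval_charpoly]
    have h2 : aeval A (C z - X ^ k) = Matrix.scalar (Fin n) z - A ^ k := by
      simp [Matrix.algebraMap_eq_diagonal]
    rw [← h2, this]
    simp [eval_multiset_prod]
  rw [Matrix.trace_eq_sum_roots_charpoly, h, roots_multiset_prod_X_sub_C]

theorem aux_newton (s : Multiset ℂ) (n : ℕ)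
    (h : ∀ k : ℕ, Odd k → k ≤ n → (s.map (fun x => x ^ k)).sum = 0) :
    ∀ k : ℕ, Odd k → k ≤ n → s.esymm k = 0 := by
  obtain ⟨l, rfl⟩ : ∃ l : List ℂ, (l : Multiset ℂ) = s := ⟨s.toList, by simp⟩
  have hl : (Finset.univ.val.map l.get : Multiset ℂ) = (l : Multiset ℂ) := by
    rw [Fin.univ_val_map, List.ofFn_get]
  have he : ∀ k, MvPolynomial.aeval l.get (MvPolynomial.esymm (Fin l.length) ℂ k)
      = (l : Multiset ℂ).esymm k := by
    intro k
    rw [MvPolynomial.aeval_esymm_eq_multiset_esymm, hl]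
  have hps : ∀ k, MvPolynomial.aeval l.get (MvPolynomial.psum (Fin l.length) ℂ k)
      = ((l : Multiset ℂ).map (fun x => x ^ k)).sum := by
    intro k
    rw [← hl, Multiset.map_map]
    simp only [MvPolynomial.psum, map_sum, map_pow, MvPolynomial.aeval_X]
    rfl
  intro k
  induction k using Nat.strong_induction_on with
  | _ k ih =>
    intro hk hkn
    have := congrArg (MvPolynomial.aeval l.get)
      (MvPolynomial.mul_esymm_eq_sum (Fin l.length) ℂ k)
    simp only [map_mul, map_sum, map_pow, map_neg, map_one, map_natCast, he, hps] at this
    rw [Finset.sum_eq_zero, mul_zero] at this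
    · have hk0 : (k : ℂ) ≠ 0 := by
        have := hk.pos
        exact_mod_cast this.ne'
      exact (mul_eq_zero.mp this).resolve_left hk0
    · rintro ⟨a, b⟩ hab
      obtain ⟨hab, hlt⟩ := Finset.mem_filter.mp hab
      replace hab : a + b = k := Finset.HasAntidiagonal.mem_antidiagonal.mp hab
      replace hlt : a < k := hlt
      rcases Nat.even_or_odd a with ha | ha
      · have hb : Odd b := by
          rw [← hab] at hk
          exact (Nat.odd_add'.mp hk).mpr ha
        simp only [h b hb (by omega), mul_zero]
      · simp only [ih a hlt ha (by omega), mul_zero, zero_mul]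

/-- If an `n×n` complex matrix `A` satisfies `Tr(A^k) = 0` for all
odd `k` with `1 ≤ k ≤ n`, then its characteristic polynomial satisfies
`χ_A(−X) = (−1)ⁿ χ_A(X)`: the spectrum of `A` is symmetric with respect to the
origin, with opposite eigenvalues of equal algebraic multiplicities. -/
theorem stmt_15 (n : ℕ) (hn : 1 ≤ n) (A : Matrix (Fin n) (Fin n) ℂ)
    (h : ∀ k : ℕ, Odd k → 1 ≤ k → k ≤ n → Matrix.trace (A ^ k) = 0) :
    (Matrix.charpoly A).comp (-Polynomial.X) = (-1) ^ n * Matrix.charpoly A := by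
  have hcard : Multiset.card A.charpoly.roots = n := by
    rw [← (IsAlgClosed.splits A.charpoly).natDegree_eq_card_roots]
    simp
  have hE := aux_newton A.charpoly.roots n (fun k hk hkn => by
    rw [← aux_trace_pow]; exact h k hk hk.pos hkn)
  ext m
  have hC : ((-1) ^ n : ℂ[X]) = C ((-1) ^ n) := by simp
  have hX : (-X : ℂ[X]) = C (-1) * X := by simp
  rw [hC, coeff_C_mul, hX, comp_C_mul_X_coeff, mul_comm]
  rcases lt_or_ge n m with hm | hm
  · rw [coeff_eq_zero_of_natDegree_lt (by simpa using hm)]; simp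
  · rcases Nat.even_or_odd (n - m) with he | ho
    · have e : ((-1 : ℂ)) ^ m * (-1) ^ (n - m) = (-1) ^ n := by
        rw [← pow_add, Nat.add_sub_cancel' hm]
      rw [← e, he.neg_one_pow, mul_one]
    · have h0 : A.charpoly.coeff m = 0 := by
        rw [(IsAlgClosed.splits A.charpoly).eq_prod_roots_of_monic A.charpoly_monic,
          Multiset.prod_X_sub_C_coeff _ (by rw [hcard]; exact hm), hcard, hE _ ho (by omega),
          mul_zero]
      rw [h0]; simp
end

section
/- Let α, θ, p, q ∈ ℝ with sin θ ≠ 0, and let X ∈ ℝ² be the unique common point of the lines ℓ(α, p) and ℓ(α + θ, q). Then ⟨X, (cos(α + θ/2 + π/2), sin(α + θ/2 + π/2))⟩ = (q − p)/(2·sin(θ/2)). Consequently, the interior angle bisector of the two cooriented lines — the line through X with normal angle α + θ/2 + π/2 — is the cooriented line ℓ(α + θ/2 + π/2, (q − p)/(2·sin(θ/2))); hence the oriented angle bisector evolute of a cooriented polygon with sides ℓ(α_j, p_j) has sides ℓ(α_j + θ_{j+1/2}/2 + π/2, (p_{j+1} − p_j)/(2·sin(θ_{j+1/2}/2))) where θ_{j+1/2}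 = α_{j+1} − α_j. -/
open Real

/-- If `X` is the common point of the cooriented lines `ℓ(α, p)`
and `ℓ(α + θ, q)` (with `sin θ ≠ 0`), then
`⟨X, (cos(α + θ/2 + π/2), sin(α + θ/2 + π/2))⟩ = (q − p)/(2 sin(θ/2))`:
the interior angle bisector of the two lines is `ℓ(α + θ/2 + π/2, (q−p)/(2 sin(θ/2)))`,
which gives the sides of the oriented angle bisector evolute. -/
theorem stmt_17 (α θ p q : ℝ) (hθ : Real.sin θ ≠ 0) (X : ℝ × ℝ)
    (h1 : X.1 * Real.cos α + X.2 * Real.sin α = p)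
    (h2 : X.1 * Real.cos (α + θ) + X.2 * Real.sin (α + θ) = q) :
    X.1 * Real.cos (α + θ / 2 + Real.pi / 2) + X.2 * Real.sin (α + θ / 2 + Real.pi / 2) =
      (q - p) / (2 * Real.sin (θ / 2)) := by
  have hs : Real.sin (θ / 2) ≠ 0 := by
    intro h
    apply hθ
    have : θ = 2 * (θ / 2) := by ring
    rw [this, Real.sin_two_mul, h]
    ring
  have e1 : α = (α + θ / 2) - θ / 2 := by ring
  have e2 : α + θ = (α + θ / 2) + θ / 2 := by ring
  rw [e2, Real.cos_add (α + θ / 2), Real.sin_add (α + θ / 2)] at h2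
  have h1' : X.1 * Real.cos ((α + θ / 2) - θ / 2) + X.2 * Real.sin ((α + θ / 2) - θ / 2) = p := by
    rw [← e1]; exact h1
  rw [Real.cos_sub, Real.sin_sub] at h1'
  rw [Real.cos_add_pi_div_two, Real.sin_add_pi_div_two, eq_div_iff (by simpa using hs)]
  linear_combination h2 - h1'
end
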